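/- Let a ≥ 2 be a real number and take t_i = (i+a)/a in GFPGM (the method FPGM-a). Then for every N ≥ 1, min_{0 ≤ i ≤ N} ‖∇̃F(x_i)‖ ≤ min( min_{0 ≤ i ≤ N−1} ‖∇̃F(y_i)‖, ‖∇̃F(x_N)‖ ) ≤ a√6 · L R / √( N((a−2)N² + 3(a² − a + 1)N + (3a² + 2a − 1)) ). -/

import Mathlib

/-!
Write `F = f + φ`, `g i = y i - x (i + 1)`. Convexity of `f` and `φ`, the descent lemma and the
optimality condition of the proximal step give, for every `y` and `z`,
`F (p y) ≤ F z - L/2 ‖y - p y‖² + L ⟪y - z, y - p y⟫` (`prox_step_le`).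
Taking this at `y i` with weight `T i - t i` at `z = x i` and weight `t i` at `z = xs`, the
auxiliary points `z i = (T i y i - (T i - t i) x i) / t i` obey `z (i + 1) = z i - t i g i`, so the
inner products telescope and
`T (N-1) (F (x N) - F xs) + L/2 ∑_{i<N} (T i - t i²) ‖g i‖² ≤ L/2 ‖x 0 - xs‖²`
(`telescoped_bound`). A further proximal step at `x N` yields
`L/2 ‖x N - p (x N)‖² ≤ F (x N) - F xs`. For `t i = (i + a) / a` with `a ≥ 2` all the weights are
nonnegative, and their total is the polynomial under the square root, divided by `6 a²`; this is
the second inequality.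

The first inequality holds because `p` is nonexpansive (`prox_nonexpansive`, from cocoercivity of
`f'` and monotonicity of the subdifferential of `φ`), whence
`‖x (i+1) - p (x (i+1))‖ = ‖p (y i) - p (p (y i))‖ ≤ ‖y i - p (y i)‖`.
-/

open scoped RealInnerProductSpace

section Helpers

variable {E : Type*} [NormedAddCommGroup E] [InnerProductSpace ℝ E]

lemma hasDerivAt_along_line {f : E → ℝ} {f' : E → E}
    (hgrad : ∀ z : E, HasFDerivAt f (innerSL ℝ (f' z)) z) (u d : E) (s : ℝ) :
    HasDerivAt (fun s : ℝ => f (u + s • d)) ⟪f' (u + s • d), d⟫ s := by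
  have h1 : HasDerivAt (fun s : ℝ => u + s • d) d s := by
    simpa using ((hasDerivAt_id s).smul_const d).const_add u
  have h2 := (hgrad (u + s • d)).comp_hasDerivAt s h1
  simpa [Function.comp_def] using h2

/-- Descent lemma: the Lipschitz gradient gives a quadratic upper model. -/
lemma descent {L : ℝ} {f : E → ℝ} {f' : E → E}
    (hgrad : ∀ z : E, HasFDerivAt f (innerSL ℝ (f' z)) z)
    (hLip : ∀ u v : E, ‖f' u - f' v‖ ≤ L * ‖u - v‖) (u v : E) :
    f v ≤ f u + ⟪f' u, v - u⟫ + L / 2 * ‖v - u‖ ^ 2 := by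
  set d := v - u with hd
  have hder : ∀ s : ℝ, HasDerivAt
      (fun s : ℝ => f (u + s • d) - s * ⟪f' u, d⟫ - L / 2 * ‖d‖ ^ 2 * s ^ 2)
      (⟪f' (u + s • d), d⟫ - ⟪f' u, d⟫ - L * ‖d‖ ^ 2 * s) s := by
    intro s
    have h := ((hasDerivAt_along_line hgrad u d s).sub
      ((hasDerivAt_id s).mul_const ⟪f' u, d⟫)).sub
      (((hasDerivAt_id s).pow 2).const_mul (L / 2 * ‖d‖ ^ 2))
    refine HasDerivAt.congr_deriv h ?_
    simp; ring
  have hanti : AntitoneOn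
      (fun s : ℝ => f (u + s • d) - s * ⟪f' u, d⟫ - L / 2 * ‖d‖ ^ 2 * s ^ 2)
      (Set.Icc 0 1) := by
    refine antitoneOn_of_deriv_nonpos (convex_Icc 0 1)
      (fun s _ => (hder s).continuousAt.continuousWithinAt)
      (fun s _ => (hder s).differentiableAt.differentiableWithinAt) ?_
    intro s hs
    rw [interior_Icc] at hs
    rw [(hder s).deriv]
    have h1 : ⟪f' (u + s • d) - f' u, d⟫ ≤ ‖f' (u + s • d) - f' u‖ * ‖d‖ :=
      real_inner_le_norm _ _
    have h2 := hLip (u + s • d) u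
    rw [add_sub_cancel_left, norm_smul, Real.norm_of_nonneg hs.1.le] at h2
    have h3 := mul_le_mul_of_nonneg_right h2 (norm_nonneg d)
    rw [inner_sub_left] at h1
    nlinarith
  have h := hanti (Set.left_mem_Icc.2 zero_le_one) (Set.right_mem_Icc.2 zero_le_one) zero_le_one
  have e : u + d = v := by rw [hd]; abel
  simp [e] at h
  linarith

lemma gradient_ineq {f : E → ℝ} {f' : E → E} (hf : ConvexOn ℝ Set.univ f)
    (hgrad : ∀ z : E, HasFDerivAt f (innerSL ℝ (f' z)) z) (u v : E) :
    f u + ⟪f' u, v - u⟫ ≤ f v := by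
  have hc : ConvexOn ℝ Set.univ (fun s : ℝ => f (u + s • (v - u))) := by
    have h := hf.comp_affineMap (AffineMap.lineMap (k := ℝ) u v)
    simpa [Function.comp_def, AffineMap.lineMap_apply, add_comm] using h
  have hd := hasDerivAt_along_line hgrad u (v - u) 0
  have h := hc.le_slope_of_hasDerivAt (Set.mem_univ 0) (Set.mem_univ 1) zero_lt_one hd
  simp [slope_def_field] at h
  linarith

lemma gradient_ineq_strong {L : ℝ} (hL : 0 < L) {f : E → ℝ} {f' : E → E}
    (hf : ConvexOn ℝ Set.univ f)
    (hgrad : ∀ z : E, HasFDerivAt f (innerSL ℝ (f' z)) z)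
    (hLip : ∀ u v : E, ‖f' u - f' v‖ ≤ L * ‖u - v‖) (u v : E) :
    f u + ⟪f' u, v - u⟫ + 1 / (2 * L) * ‖f' v - f' u‖ ^ 2 ≤ f v := by
  -- Compare the tangent at `u` with the quadratic upper model at `v`, at the point minimizing
  -- the difference of the two.
  set D := f' v - f' u with hD
  have h1 := gradient_ineq hf hgrad u (v - L⁻¹ • D)
  have h2 := descent hgrad hLip v (v - L⁻¹ • D)
  have e1 : v - L⁻¹ • D - u = (v - u) - L⁻¹ • D := by abel
  have e2 : v - L⁻¹ • D - v = -(L⁻¹ • D) := by abel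
  rw [e1, inner_sub_right, real_inner_smul_right] at h1
  rw [e2, inner_neg_right, real_inner_smul_right, norm_neg, norm_smul,
    Real.norm_of_nonneg (inv_nonneg.2 hL.le), mul_pow] at h2
  have e3 : ⟪f' v, D⟫ - ⟪f' u, D⟫ = ‖D‖ ^ 2 := by
    rw [← inner_sub_left, ← hD, real_inner_self_eq_norm_sq]
  have e4 : L / 2 * (L⁻¹ ^ 2 * ‖D‖ ^ 2) = L⁻¹ / 2 * ‖D‖ ^ 2 := by field_simp
  have e5 : 1 / (2 * L) = L⁻¹ / 2 := by field_simp
  rw [e4] at h2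
  rw [e5]
  have e6 : L⁻¹ * ⟪f' v, D⟫ = L⁻¹ * ⟪f' u, D⟫ + L⁻¹ * ‖D‖ ^ 2 := by rw [← e3]; ring
  linarith

lemma cocoercive {L : ℝ} (hL : 0 < L) {f : E → ℝ} {f' : E → E}
    (hf : ConvexOn ℝ Set.univ f)
    (hgrad : ∀ z : E, HasFDerivAt f (innerSL ℝ (f' z)) z)
    (hLip : ∀ u v : E, ‖f' u - f' v‖ ≤ L * ‖u - v‖) (u v : E) :
    ‖f' u - f' v‖ ^ 2 ≤ L * ⟪f' u - f' v, u - v⟫ := by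
  have h1 := gradient_ineq_strong hL hf hgrad hLip u v
  have h2 := gradient_ineq_strong hL hf hgrad hLip v u
  rw [norm_sub_rev] at h1
  have e : ⟪f' u - f' v, u - v⟫ = -⟪f' u, v - u⟫ - ⟪f' v, u - v⟫ := by
    rw [inner_sub_left, ← neg_sub v u, inner_neg_right, inner_neg_right]
  have e1 : ‖f' u - f' v‖ ^ 2 = L * (2 * (1 / (2 * L) * ‖f' u - f' v‖ ^ 2)) := by field_simp
  rw [e1, e]
  exact mul_le_mul_of_nonneg_left (by linarith) hL.le

/-- Optimality condition of the proximal step: `L (y - p y) - f' y` is a subgradient of `φ`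
at `p y`. -/
lemma prox_subgradient {L : ℝ} (f : E → ℝ) {f' : E → E} {φ : E → ℝ}
    (hφ : ConvexOn ℝ Set.univ φ) {p : E → E}
    (hp : ∀ y : E, IsMinOn
      (fun z => f y + ⟪f' y, z - y⟫ + L / 2 * ‖z - y‖ ^ 2 + φ z) Set.univ (p y)) (y z : E) :
    φ (p y) + ⟪L • (y - p y) - f' y, z - p y⟫ ≤ φ z := by
  set d := z - p y with hd
  set A := φ z - φ (p y) - ⟪L • (y - p y) - f' y, d⟫ with hA
  -- Minimality against the point `p y + s d`, divided by `s`.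
  have key : ∀ s : ℝ, 0 < s → s ≤ 1 → 0 ≤ A + L / 2 * ‖d‖ ^ 2 * s := by
    intro s hs hs1
    have h1 := isMinOn_iff.1 (hp y) (p y + s • d) (Set.mem_univ _)
    have h2 := hφ.2 (Set.mem_univ (p y)) (Set.mem_univ z) (sub_nonneg.2 hs1) hs.le (by ring)
    have e : (1 - s) • p y + s • z = p y + s • d := by
      rw [hd, smul_sub, sub_smul, one_smul]; abel
    rw [e] at h2
    simp only [smul_eq_mul] at h2
    have e1 : p y + s • d - y = (p y - y) + s • d := by abel
    simp only [e1, inner_add_right, real_inner_smul_right, norm_add_sq_real, norm_smul,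
      Real.norm_of_nonneg hs.le] at h1
    have e2 : ⟪L • (y - p y) - f' y, d⟫ = - (L * ⟪p y - y, d⟫) - ⟪f' y, d⟫ := by
      rw [inner_sub_left, real_inner_smul_left, ← neg_sub (p y) y, inner_neg_left]; ring
    have h3 : 0 ≤ s * (A + L / 2 * ‖d‖ ^ 2 * s) := by
      rw [hA, e2]; nlinarith
    exact nonneg_of_mul_nonneg_right h3 hs
  have hlim : Filter.Tendsto (fun s : ℝ => A + L / 2 * ‖d‖ ^ 2 * s)
      (nhdsWithin 0 (Set.Ioi 0)) (nhds A) := by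
    have : Continuous (fun s : ℝ => A + L / 2 * ‖d‖ ^ 2 * s) := by fun_prop
    have h := this.tendsto 0
    simp only [mul_zero, add_zero] at h
    exact h.mono_left nhdsWithin_le_nhds
  have : 0 ≤ A := by
    refine ge_of_tendsto hlim ?_
    filter_upwards [Ioc_mem_nhdsGT (zero_lt_one' ℝ)] with s hs using key s hs.1 hs.2
  linarith

lemma prox_step_le {L : ℝ} {f : E → ℝ} {f' : E → E} {φ : E → ℝ}
    (hf : ConvexOn ℝ Set.univ f)
    (hgrad : ∀ z : E, HasFDerivAt f (innerSL ℝ (f' z)) z)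
    (hLip : ∀ u v : E, ‖f' u - f' v‖ ≤ L * ‖u - v‖)
    (hφ : ConvexOn ℝ Set.univ φ) {p : E → E}
    (hp : ∀ y : E, IsMinOn
      (fun z => f y + ⟪f' y, z - y⟫ + L / 2 * ‖z - y‖ ^ 2 + φ z) Set.univ (p y)) (y z : E) :
    f (p y) + φ (p y) ≤ f z + φ z - L / 2 * ‖y - p y‖ ^ 2 + L * ⟪y - z, y - p y⟫ := by
  have h1 := descent hgrad hLip y (p y)
  have h2 := gradient_ineq hf hgrad y z
  have h3 := prox_subgradient f hφ hp y z
  have e : z - p y = (z - y) - (p y - y) := by abel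
  rw [inner_sub_left, real_inner_smul_left, e] at h3
  have e2 : y - p y = -(p y - y) := by abel
  have e3 : y - z = -(z - y) := by abel
  rw [e2, inner_neg_left, inner_sub_right (p y - y), inner_sub_right (f' y),
    real_inner_self_eq_norm_sq, real_inner_comm (z - y)] at h3
  rw [e2, norm_neg, e3, inner_neg_neg]
  nlinarith

lemma prox_nonexpansive {L : ℝ} (hL : 0 < L) {f : E → ℝ} {f' : E → E} {φ : E → ℝ}
    (hf : ConvexOn ℝ Set.univ f)
    (hgrad : ∀ z : E, HasFDerivAt f (innerSL ℝ (f' z)) z)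
    (hLip : ∀ u v : E, ‖f' u - f' v‖ ≤ L * ‖u - v‖)
    (hφ : ConvexOn ℝ Set.univ φ) {p : E → E}
    (hp : ∀ y : E, IsMinOn
      (fun z => f y + ⟪f' y, z - y⟫ + L / 2 * ‖z - y‖ ^ 2 + φ z) Set.univ (p y)) (u v : E) :
    ‖p u - p v‖ ≤ ‖u - v‖ := by
  have h1 := prox_subgradient f hφ hp u (p v)
  have h2 := prox_subgradient f hφ hp v (p u)
  have h3 := cocoercive hL hf hgrad hLip u v
  set D := f' u - f' v with hD
  set W := u - v with hW
  set P := p u - p v with hP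
  -- `p` is nonexpansive as a function of the gradient step `y - f' y / L`.
  have h4 : L * ‖P‖ ^ 2 ≤ ⟪L • W - D, P⟫ := by
    have e1 : p v - p u = -P := by rw [hP]; abel
    rw [e1, inner_neg_right] at h1
    have e : (L • (u - p u) - f' u) - (L • (v - p v) - f' v) = (L • W - D) - L • P := by
      rw [hP, hW, hD]; simp only [smul_sub]; abel
    have h5 : ⟪(L • W - D) - L • P, P⟫
        = ⟪L • (u - p u) - f' u, P⟫ - ⟪L • (v - p v) - f' v, P⟫ := by
      rw [← e, inner_sub_left]
    rw [inner_sub_left, real_inner_smul_left P P, real_inner_self_eq_norm_sq] at h5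
    linarith
  have h5 : ‖L • W - D‖ ≤ L * ‖W‖ := by
    refine (sq_le_sq₀ (by positivity) (by positivity)).1 ?_
    rw [norm_sub_sq_real, real_inner_smul_left, norm_smul, Real.norm_of_nonneg hL.le,
      real_inner_comm]
    nlinarith [sq_nonneg ‖D‖]
  have h6 := real_inner_le_norm (L • W - D) P
  have h7 := mul_le_mul_of_nonneg_right h5 (norm_nonneg P)
  rcases (norm_nonneg P).eq_or_lt with h0 | h0
  · rw [← h0]; exact norm_nonneg _
  · have : (L * ‖P‖) * ‖P‖ ≤ (L * ‖P‖) * ‖W‖ := by nlinarith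
    exact le_of_mul_le_mul_left this (by positivity)

/-- The telescoped estimate for general positive parameters `t` with partial sums `T`. The vector
`(t i)⁻¹ • (T i • y i - (T i - t i) • x i)` is the auxiliary point whose distance to `z` is tracked;
in the conclusion `i = n + 1`, where `T i - t i = T n`. -/
lemma telescoped_bound {L : ℝ} {F : E → ℝ} {p : E → E}
    (hstep : ∀ y z : E,
      F (p y) ≤ F z - L / 2 * ‖y - p y‖ ^ 2 + L * ⟪y - z, y - p y⟫)
    {t T : ℕ → ℝ} (htpos : ∀ i, 0 < t i) (hT0 : T 0 = t 0)
    (hTs : ∀ i, T (i + 1) = T i + t (i + 1)) (hTpos : ∀ i, 0 < T i)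
    {x y : ℕ → E} (hy0 : y 0 = x 0) (hx : ∀ i, x (i + 1) = p (y i))
    (hy : ∀ i, y (i + 1) = x (i + 1)
        + ((T i - t i) * t (i + 1) / (t i * T (i + 1))) • (x (i + 1) - x i)
        + ((t i ^ 2 - T i) * t (i + 1) / (t i * T (i + 1))) • (x (i + 1) - y i))
    (z : E) (n : ℕ) :
    T n * (F (x (n + 1)) - F z)
      + L / 2 * ∑ i ∈ Finset.range (n + 1), (T i - t i ^ 2) * ‖y i - p (y i)‖ ^ 2
      + L / 2 * ‖(t (n + 1))⁻¹ • (T (n + 1) • y (n + 1) - T n • x (n + 1)) - z‖ ^ 2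
      ≤ L / 2 * ‖x 0 - z‖ ^ 2 := by
  -- Recursion of the auxiliary points.
  have hz : ∀ i, (t (i + 1))⁻¹ • (T (i + 1) • y (i + 1) - T i • x (i + 1))
      = (t i)⁻¹ • (T i • y i - (T i - t i) • x i) - t i • (y i - p (y i)) := by
    intro i
    have h1 := (htpos i).ne'
    have h2 := (htpos (i + 1)).ne'
    have h3 := (hTpos (i + 1)).ne'
    rw [hy i, ← hx i]
    match_scalars
    · field_simp
      rw [hTs i]; ring
    · field_simp
    · field_simp
      ring
  have hone : ∀ i (w : E), (T i - t i) • x i = T i • y i - t i • w → 0 ≤ T i - t i →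
      T i * (F (x (i + 1)) - F z) + L / 2 * ((T i - t i ^ 2) * ‖y i - p (y i)‖ ^ 2)
        + L / 2 * ‖w - t i • (y i - p (y i)) - z‖ ^ 2
      ≤ (T i - t i) * (F (x i) - F z) + L / 2 * ‖w - z‖ ^ 2 := by
    intro i w hw hTt
    rw [hx i]
    have h1 := mul_le_mul_of_nonneg_left (hstep (y i) (x i)) hTt
    have h2 := mul_le_mul_of_nonneg_left (hstep (y i) z) (htpos i).le
    set g := y i - p (y i) with hg
    have e : w - t i • g - z = (w - z) - t i • g := by abel
    have e2 : (T i - t i) * ⟪y i - x i, g⟫ + t i * ⟪y i - z, g⟫ = t i * ⟪w - z, g⟫ := by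
      rw [← real_inner_smul_left, ← real_inner_smul_left, ← real_inner_smul_left,
        ← inner_add_left]
      congr 1
      rw [smul_sub, hw]
      module
    rw [e, norm_sub_sq_real (w - z), real_inner_smul_right, norm_smul, mul_pow, Real.norm_eq_abs, sq_abs]
    linear_combination h1 + h2 + L * e2
  induction n with
  | zero =>
    have hw := hone 0 (x 0) (by rw [hy0, hT0]; module) (by rw [hT0]; simp)
    rw [hz 0, Finset.sum_range_one, hT0, hy0]
    rw [hT0, hy0] at hw
    have e : (t 0)⁻¹ • (t 0 • x 0 - (t 0 - t 0) • x 0) = x 0 := by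
      rw [sub_self, zero_smul, sub_zero, inv_smul_smul₀ (htpos 0).ne']
    rw [e]
    simpa using hw
  | succ n ih =>
    have hTn : T (n + 1) - t (n + 1) = T n := by rw [hTs n]; ring
    have hw := hone (n + 1)
      ((t (n + 1))⁻¹ • (T (n + 1) • y (n + 1) - T n • x (n + 1)))
      (by rw [smul_inv_smul₀ (htpos (n + 1)).ne', hTn]; module)
      (by rw [hTn]; exact (hTpos n).le)
    rw [hz (n + 1), Finset.sum_range_succ, hTn]
    rw [hTn] at hw
    linarith

end Helpers

/-- FPGM-a (GFPGM with t_i = (i+a)/a, a ≥ 2) satisfies, for N ≥ 1,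
min_{0≤i≤N} ‖∇̃F(x_i)‖ ≤ min( min_{0≤i≤N−1} ‖∇̃F(y_i)‖, ‖∇̃F(x_N)‖ )
≤ a√6·LR/√( N((a−2)N² + 3(a²−a+1)N + (3a²+2a−1)) ). -/
theorem fpgm_a_cgm_bound
    {E : Type*} [NormedAddCommGroup E] [InnerProductSpace ℝ E]
    (L : ℝ) (hL : 0 < L)
    (f : E → ℝ) (f' : E → E) (φ : E → ℝ)
    (hf : ConvexOn ℝ Set.univ f)
    (hgrad : ∀ z : E, HasFDerivAt f (innerSL ℝ (f' z)) z)
    (hLip : ∀ u v : E, ‖f' u - f' v‖ ≤ L * ‖u - v‖)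
    (hφ : ConvexOn ℝ Set.univ φ)
    (p : E → E)
    (hp : ∀ y : E, IsMinOn
      (fun z => f y + ⟪f' y, z - y⟫ + L / 2 * ‖z - y‖ ^ 2 + φ z) Set.univ (p y))
    (xs : E) (hxs : IsMinOn (fun z => f z + φ z) Set.univ xs)
    (R : ℝ) (hR0 : 0 ≤ R)
    (a : ℝ) (ha : 2 ≤ a)
    (t T : ℕ → ℝ) (ht : ∀ i, t i = ((i : ℝ) + a) / a)
    (hT : ∀ i, T i = ∑ l ∈ Finset.range (i + 1), t l)
    (x y : ℕ → E)
    (hy0 : y 0 = x 0)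
    (hx : ∀ i, x (i + 1) = p (y i))
    (hy : ∀ i, y (i + 1) = x (i + 1)
        + ((T i - t i) * t (i + 1) / (t i * T (i + 1))) • (x (i + 1) - x i)
        + ((t i ^ 2 - T i) * t (i + 1) / (t i * T (i + 1))) • (x (i + 1) - y i))
    (hR : ‖x 0 - xs‖ ≤ R)
    (N : ℕ) (hN : 1 ≤ N) :
    (Finset.range (N + 1)).inf' (Finset.nonempty_range_iff.mpr (Nat.succ_ne_zero N))
        (fun i => L * ‖x i - p (x i)‖)
      ≤ min ((Finset.range N).inf' (Finset.nonempty_range_iff.mpr (by omega))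
          (fun i => L * ‖y i - p (y i)‖)) (L * ‖x N - p (x N)‖) ∧
    min ((Finset.range N).inf' (Finset.nonempty_range_iff.mpr (by omega))
          (fun i => L * ‖y i - p (y i)‖)) (L * ‖x N - p (x N)‖)
      ≤ a * Real.sqrt 6 * L * R / Real.sqrt ((N : ℝ) *
          ((a - 2) * (N : ℝ) ^ 2 + 3 * (a ^ 2 - a + 1) * (N : ℝ) + (3 * a ^ 2 + 2 * a - 1))) := by
  have ha0 : 0 < a := by linarith
  have hstep := prox_step_le hf hgrad hLip hφ hp
  have hxs' : ∀ z, f xs + φ xs ≤ f z + φ z := fun z => isMinOn_iff.1 hxs z (Set.mem_univ _)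
  refine ⟨le_min (Finset.le_inf' _ _ fun i hi => ?_) ?_, ?_⟩
  · have hi' := Finset.mem_range.1 hi
    refine (Finset.inf'_le _ (Finset.mem_range.2 (Nat.succ_lt_succ hi'))).trans ?_
    refine mul_le_mul_of_nonneg_left ?_ hL.le
    rw [Nat.succ_eq_add_one, hx i]
    exact prox_nonexpansive hL hf hgrad hLip hφ hp _ _
  · exact Finset.inf'_le (fun i => L * ‖x i - p (x i)‖) (Finset.mem_range.2 (Nat.lt_succ_self N))
  obtain ⟨n, rfl⟩ : ∃ n, N = n + 1 := ⟨N - 1, by omega⟩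
  have htpos : ∀ i, 0 < t i := fun i => by rw [ht]; positivity
  have hTs : ∀ i, T (i + 1) = T i + t (i + 1) := fun i => by
    rw [hT, hT, Finset.sum_range_succ _ (i + 1)]
  have hT0 : T 0 = t 0 := by rw [hT]; simp
  have hTpos : ∀ i, 0 < T i := fun i => by
    rw [hT]; exact Finset.sum_pos (fun j _ => htpos j) (by simp)
  have hTf : ∀ i : ℕ, T i = ((i : ℝ) + 1) * (i + 2 * a) / (2 * a) := by
    intro i
    induction i with
    | zero => rw [hT0, ht]; field_simp; push_cast; ring
    | succ i ih => rw [hTs, ih, ht]; field_simp; push_cast; ring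
  have hdiff : ∀ i : ℕ, T i - t i ^ 2
      = ((a - 2) * (i : ℝ) ^ 2 + a * (2 * a - 3) * i) / (2 * a ^ 2) := by
    intro i
    rw [hTf, ht]; field_simp; ring
  have hdiff0 : ∀ i : ℕ, 0 ≤ T i - t i ^ 2 := by
    intro i
    rw [hdiff]
    have h1 : 0 ≤ a - 2 := by linarith
    have h2 : 0 ≤ 2 * a - 3 := by linarith
    positivity
  set B : ℝ := ((n + 1 : ℕ) : ℝ) * ((a - 2) * ((n + 1 : ℕ) : ℝ) ^ 2
      + 3 * (a ^ 2 - a + 1) * ((n + 1 : ℕ) : ℝ) + (3 * a ^ 2 + 2 * a - 1)) with hB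
  have hsum : ∀ m : ℕ, ∑ i ∈ Finset.range (m + 1), (T i - t i ^ 2)
      = ((m : ℝ) * (m + 1)) * ((a - 2) * (2 * m + 1) + 3 * a * (2 * a - 3)) / (12 * a ^ 2) := by
    intro m
    induction m with
    | zero => simp [hdiff]
    | succ m ih =>
      rw [Finset.sum_range_succ, ih, hdiff]; field_simp; push_cast; ring
  have htotal : T n + ∑ i ∈ Finset.range (n + 1), (T i - t i ^ 2) = B / (6 * a ^ 2) := by
    rw [hsum, hTf, hB]; field_simp; push_cast; ring
  have hBpos : 0 < B := by
    have h1 : 0 < B / (6 * a ^ 2) := by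
      rw [← htotal]
      exact add_pos_of_pos_of_nonneg (hTpos n) (Finset.sum_nonneg fun i _ => hdiff0 i)
    exact (div_pos_iff_of_pos_right (by positivity)).1 h1
  have hmain := telescoped_bound (F := fun z => f z + φ z) hstep htpos hT0 hTs hTpos hy0 hx hy xs n
  set m := min ((Finset.range (n + 1)).inf' (Finset.nonempty_range_iff.mpr (by omega))
          (fun i => L * ‖y i - p (y i)‖)) (L * ‖x (n + 1) - p (x (n + 1))‖) with hm
  have hm0 : 0 ≤ m := le_min (Finset.le_inf' _ _ fun i _ => by positivity) (by positivity)
  have hmy : ∀ i ∈ Finset.range (n + 1), m ^ 2 ≤ L ^ 2 * ‖y i - p (y i)‖ ^ 2 := by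
    intro i hi
    rw [← mul_pow]
    exact pow_le_pow_left₀ hm0 ((min_le_left _ _).trans (Finset.inf'_le _ hi)) 2
  have hmx : m ^ 2 ≤ L ^ 2 * ‖x (n + 1) - p (x (n + 1))‖ ^ 2 := by
    rw [← mul_pow]
    exact pow_le_pow_left₀ hm0 (min_le_right _ _) 2
  have hlast : L / 2 * ‖x (n + 1) - p (x (n + 1))‖ ^ 2
      ≤ (f (x (n + 1)) + φ (x (n + 1))) - (f xs + φ xs) := by
    have h1 := hstep (x (n + 1)) (x (n + 1))
    rw [sub_self, inner_zero_left] at h1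
    linarith [hxs' (p (x (n + 1)))]
  have hbound : T n * ‖x (n + 1) - p (x (n + 1))‖ ^ 2
      + ∑ i ∈ Finset.range (n + 1), (T i - t i ^ 2) * ‖y i - p (y i)‖ ^ 2 ≤ R ^ 2 := by
    have h1 := mul_le_mul_of_nonneg_left hlast (hTpos n).le
    have h2 : ‖x 0 - xs‖ ^ 2 ≤ R ^ 2 := pow_le_pow_left₀ (norm_nonneg _) hR 2
    have h3 := mul_le_mul_of_nonneg_left h2 (by positivity : 0 ≤ L / 2)
    have h4 : 0 ≤ L / 2 * ‖(t (n + 1))⁻¹ • (T (n + 1) • y (n + 1) - T n • x (n + 1)) - xs‖ ^ 2 := by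
      positivity
    refine le_of_mul_le_mul_left ?_ (by positivity : 0 < L / 2)
    linarith
  have hsq : m ^ 2 * (B / (6 * a ^ 2)) ≤ L ^ 2 * R ^ 2 := by
    rw [← htotal, mul_add, Finset.mul_sum]
    refine le_trans ?_ (mul_le_mul_of_nonneg_left hbound (sq_nonneg L))
    rw [mul_add, Finset.mul_sum]
    refine add_le_add ?_ (Finset.sum_le_sum fun i hi => ?_)
    · linarith [mul_le_mul_of_nonneg_left hmx (hTpos n).le]
    · linarith [mul_le_mul_of_nonneg_left (hmy i hi) (hdiff0 i)]
  rw [le_div_iff₀ (Real.sqrt_pos.2 hBpos)]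
  refine (sq_le_sq₀ (by positivity) (by positivity)).1 ?_
  rw [mul_pow, Real.sq_sqrt hBpos.le]
  have e : (a * Real.sqrt 6 * L * R) ^ 2 = 6 * a ^ 2 * (L ^ 2 * R ^ 2) := by
    rw [mul_pow, mul_pow, mul_pow, Real.sq_sqrt (by norm_num)]; ring
  have e2 : m ^ 2 * B = 6 * a ^ 2 * (m ^ 2 * (B / (6 * a ^ 2))) := by field_simp
  rw [e, e2]
  exact mul_le_mul_of_nonneg_left hsq (by positivity)
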